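/- Let R be a commutative ring and n ≥ 3. For elements B_1,…,B_{n−1}, A_0, A_1,…,A_{n−1} of R define K_n := −A_0²·Q_{n−2}(B_2,…,B_{n−1}; A_2,…,A_{n−2}) − A_{n−1}²·Q_{n−2}(B_1,…,B_{n−2}; A_1,…,A_{n−3}) + 2·(−1)^{n−1}·A_0·A_1·⋯·A_{n−1}. Then K_n·Q_{n−2}(B_2,…,B_{n−1}; A_2,…,A_{n−2}) + (A_0·Q_{n−2}(B_2,…,B_{n−1}; A_2,…,A_{n−2}) + (−1)^{n}·A_1·A_2·⋯·A_{n−1})² = −A_{n−1}²·Q_{n−3}(B_2,…,B_{n−2}; A_2,…,A_{n−3})·Q_{n−1}(B_1,…,B_{n−1}; A_1,…,A_{n−2}). In particular the left-hand side is divisible by Q_{n−1}(B_1,…,B_{n−1}; A_1,…,A_{n−2}), so K_n·Q_{n−2}(B_2,…,B_{n−1}; A_2,…,A_{n−2}) is congruent to minus a perfect square modulo Q_{n−1}(B_1,…,B_{n−1}; A_1,…,A_{n−2}). -/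

import Mathlib

/-- `Qtri n B A` is the determinant of the `n × n` symmetric tridiagonal matrix with
diagonal entries `B 1, …, B n` and off-diagonal entries `A 1, …, A (n-1)`
(so `Qtri 0 B A = 1` by convention). -/
def Qtri {R : Type} [CommRing R] (n : ℕ) (B A : ℕ → R) : R :=
  Matrix.det (Matrix.of fun i j : Fin n =>
    if (i : ℕ) = (j : ℕ) then B ((i : ℕ) + 1)
    else if (i : ℕ) + 1 = (j : ℕ) then A ((i : ℕ) + 1)
    else if (j : ℕ) + 1 = (i : ℕ) then A ((j : ℕ) + 1)
    else 0)

theorem Qtri_rec {R : Type} [CommRing R] (k : ℕ) (B A : ℕ → R) :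
    Qtri (k + 2) B A = B (k + 2) * Qtri (k + 1) B A - A (k + 1) ^ 2 * Qtri k B A := by
  have hpow : ∀ m : ℕ, ((-1 : R)) ^ (m + m) = 1 := fun m => (Even.add_self m).neg_one_pow
  unfold Qtri
  rw [Matrix.det_succ_row _ (Fin.last (k + 1)), Fin.sum_univ_castSucc, Fin.sum_univ_castSucc]
  rw [Finset.sum_eq_zero]
  · rw [Matrix.det_succ_column (Matrix.submatrix _ _ (Fin.last k).castSucc.succAbove) (Fin.last k),
      Fin.sum_univ_castSucc, Finset.sum_eq_zero]
    · have e1 : ((-1 : R)) ^ (k + 1 + k) = -1 := by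
        rw [show k + 1 + k = (k + k) + 1 by ring, pow_succ, hpow]; ring
      have h1 : ∀ i : Fin k, ((Fin.last k).castSucc.succAbove i.castSucc : Fin (k+2)) = i.castSucc.castSucc := by
        intro i
        rw [Fin.succAbove_of_castSucc_lt]
        simp [Fin.lt_def]
      have h2 : ((Fin.last k).castSucc.succAbove (Fin.last k) : Fin (k+2)) = Fin.last (k+1) := by
        rw [Fin.succAbove_of_le_castSucc] <;> simp
      have h3 : ¬ (k + 1 + 1 = k) := by omega
      simp [Matrix.submatrix, e1, hpow, h1, h2, h3, Matrix.of_apply]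
      ring
    · intro i _
      have h2 : ((Fin.last k).castSucc.succAbove (Fin.last k) : Fin (k+2)) = Fin.last (k+1) := by
        rw [Fin.succAbove_of_le_castSucc] <;> simp
      have := i.2
      simp only [Matrix.submatrix_apply, h2, Fin.succAbove_last, Matrix.of_apply, Fin.val_castSucc,
        Fin.val_last]
      rw [if_neg (by omega), if_neg (by omega), if_neg (by omega)]
      ring
  · intro i _
    have := i.2
    simp only [Matrix.of_apply, Fin.val_castSucc, Fin.val_last]
    rw [if_neg (by omega), if_neg (by omega), if_neg (by omega)]
    ring

theorem Qtri_dodgson {R : Type} [CommRing R] (B A : ℕ → R) (m : ℕ) :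
    Qtri (m + 1) B A * Qtri (m + 1) (fun k => B (k + 1)) (fun k => A (k + 1))
      - Qtri m (fun k => B (k + 1)) (fun k => A (k + 1)) * Qtri (m + 2) B A
      = (∏ i ∈ Finset.range (m + 1), A (i + 1)) ^ 2 := by
  induction m with
  | zero =>
    rw [Qtri_rec]
    simp [Qtri]
    ring
  | succ m ih =>
    rw [Finset.prod_range_succ, mul_pow, ← ih, Qtri_rec (m + 1) B A,
      Qtri_rec m (fun k => B (k + 1))]
    ring

/-- **The key congruence (12.7) for the de Rham class of the wheel**, in homogeneous
form.  For `n ≥ 3`, with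
`K_n := −A_0²·Q_{n−2}(B_2,…,B_{n−1}; A_2,…,A_{n−2})
        − A_{n−1}²·Q_{n−2}(B_1,…,B_{n−2}; A_1,…,A_{n−3}) + 2·(−1)^{n−1}·A_0⋯A_{n−1}`,
one has
`K_n·Q_{n−2}(B_2,…; A_2,…) + (A_0·Q_{n−2}(B_2,…; A_2,…) + (−1)^n·A_1⋯A_{n−1})²
   = −A_{n−1}²·Q_{n−3}(B_2,…,B_{n−2}; A_2,…,A_{n−3})·Q_{n−1}(B_1,…,B_{n−1}; A_1,…,A_{n−2})`;
in particular the left-hand side is divisible by `Q_{n−1}(B_1,…,B_{n−1}; A_1,…,A_{n−2})`. -/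
theorem qtri_wheel_congruence {R : Type} [CommRing R] (n : ℕ) (hn : 3 ≤ n) (B A : ℕ → R) :
    ((-(A 0) ^ 2 * Qtri (n - 2) (fun k => B (k + 1)) (fun k => A (k + 1))
          - (A (n - 1)) ^ 2 * Qtri (n - 2) B A
          + 2 * (-1 : R) ^ (n - 1) * ∏ i ∈ Finset.range n, A i)
        * Qtri (n - 2) (fun k => B (k + 1)) (fun k => A (k + 1))
      + (A 0 * Qtri (n - 2) (fun k => B (k + 1)) (fun k => A (k + 1))
          + (-1 : R) ^ n * ∏ i ∈ Finset.Icc 1 (n - 1), A i) ^ 2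
      = -(A (n - 1)) ^ 2 * Qtri (n - 3) (fun k => B (k + 1)) (fun k => A (k + 1))
          * Qtri (n - 1) B A)
    ∧ Qtri (n - 1) B A ∣
        ((-(A 0) ^ 2 * Qtri (n - 2) (fun k => B (k + 1)) (fun k => A (k + 1))
            - (A (n - 1)) ^ 2 * Qtri (n - 2) B A
            + 2 * (-1 : R) ^ (n - 1) * ∏ i ∈ Finset.range n, A i)
          * Qtri (n - 2) (fun k => B (k + 1)) (fun k => A (k + 1))
        + (A 0 * Qtri (n - 2) (fun k => B (k + 1)) (fun k => A (k + 1))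
            + (-1 : R) ^ n * ∏ i ∈ Finset.Icc 1 (n - 1), A i) ^ 2) := by
  have key : ((-(A 0) ^ 2 * Qtri (n - 2) (fun k => B (k + 1)) (fun k => A (k + 1))
          - (A (n - 1)) ^ 2 * Qtri (n - 2) B A
          + 2 * (-1 : R) ^ (n - 1) * ∏ i ∈ Finset.range n, A i)
        * Qtri (n - 2) (fun k => B (k + 1)) (fun k => A (k + 1))
      + (A 0 * Qtri (n - 2) (fun k => B (k + 1)) (fun k => A (k + 1))
          + (-1 : R) ^ n * ∏ i ∈ Finset.Icc 1 (n - 1), A i) ^ 2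
      = -(A (n - 1)) ^ 2 * Qtri (n - 3) (fun k => B (k + 1)) (fun k => A (k + 1))
          * Qtri (n - 1) B A) := by
    obtain ⟨m, rfl⟩ := Nat.exists_eq_add_of_le' hn
    have hd := Qtri_dodgson B A m
    have hI : ∏ i ∈ Finset.Icc 1 (m + 2), A i
        = (∏ i ∈ Finset.range (m + 1), A (i + 1)) * A (m + 2) := by
      rw [← Finset.prod_range_succ (fun i => A (i + 1)), Finset.range_eq_Ico,
        Finset.prod_Ico_add' A 0 (m + 2) 1]
      rfl
    have hR : ∏ i ∈ Finset.range (m + 3), A i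
        = (∏ i ∈ Finset.range (m + 1), A (i + 1)) * A (m + 2) * A 0 := by
      rw [Finset.prod_range_succ', Finset.prod_range_succ]
    simp only [show m + 3 - 1 = m + 2 from rfl, show m + 3 - 2 = m + 1 from rfl,
      show m + 3 - 3 = m from rfl]
    rw [hI, hR]
    have hs : ((-1 : R) ^ m) ^ 2 = 1 := by rw [← pow_mul, mul_comm, pow_mul]; simp
    rw [pow_add (-1 : R) m 2, pow_add (-1 : R) m 3]
    generalize (-1 : R) ^ m = e at *
    generalize (∏ i ∈ Finset.range (m + 1), A (i + 1)) = p at *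
    linear_combination (-(A (m + 2)) ^ 2) * hd + p ^ 2 * A (m + 2) ^ 2 * hs
  exact ⟨key, key ▸ Dvd.intro_left _ rfl⟩
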